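/- arXiv:1002.1372 — 7 statements merged into one kernel-verified Lean document; each statement's English description precedes it below -/
import Mathlib

section
/- Let K be a subgroup of a group A and let K̄ denote the normal closure of K in A. Then ⁅⊤, K⁆ = ⁅⊤, K̄⁆, i.e. the commutator of A with K equals the commutator of A with the normal closure of K. (Group-theoretic case of Proposition 'kbar': in an ideal-determined unital category, [A,K] = [A,K̄].) -/
/-!
The commutator `⁅⊤, K⁆` is normal for every subgroup `K`, and a normal subgroup `N` contains
`⁅⊤, K⁆` exactly when `K` becomes central modulo `N`. The elements that are central modulo `N` form
a normal subgroup, so this condition on `K` passes to its normal closure; take `N = ⁅⊤, K⁆`.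
-/

section

open Subgroup

variable {A B : Type*} [Group A] [Group B]

theorem commutator_top_le_ker_iff_le_comap_center {f : A →* B} (hf : Function.Surjective f)
    (K : Subgroup A) : ⁅(⊤ : Subgroup A), K⁆ ≤ f.ker ↔ K ≤ (center B).comap f := by
  rw [← Subgroup.map_eq_bot_iff, map_commutator, map_top_of_surjective f hf,
    commutator_top_left_eq_bot_iff_le_center, map_le_iff_le_comap]

theorem commutator_top_le_iff_le_comap_center (K N : Subgroup A) [N.Normal] :
    ⁅(⊤ : Subgroup A), K⁆ ≤ N ↔ K ≤ (center (A ⧸ N)).comap (QuotientGroup.mk' N) := by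
  simpa only [QuotientGroup.ker_mk'] using
    commutator_top_le_ker_iff_le_comap_center (QuotientGroup.mk'_surjective N) K

theorem commutator_top_normalClosure_le {K N : Subgroup A} [N.Normal]
    (h : ⁅(⊤ : Subgroup A), K⁆ ≤ N) : ⁅(⊤ : Subgroup A), normalClosure (K : Set A)⁆ ≤ N := by
  rw [commutator_top_le_iff_le_comap_center] at h ⊢
  exact normalClosure_le_normal h

instance commutator_top_left_normal (K : Subgroup A) : (⁅(⊤ : Subgroup A), K⁆).Normal :=
  normalizer_eq_top_iff.mp (top_le_iff.mp (normalizer_commutator_ge_left ⊤ K))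

end

/-- For a subgroup `K` of a group `A`, the commutator of `A` with `K` equals
the commutator of `A` with the normal closure of `K`. -/
theorem commutator_top_normalClosure {A : Type*} [Group A] (K : Subgroup A) :
    ⁅(⊤ : Subgroup A), K⁆ = ⁅(⊤ : Subgroup A), Subgroup.normalClosure (K : Set A)⁆ := by
  apply le_antisymm
  · exact Subgroup.commutator_mono le_rfl Subgroup.le_normalClosure
  · exact commutator_top_normalClosure_le le_rfl
end

section
/- Let H and K be subgroups of a group A, let H ∗ K denote their free product, let Σ : H ∗ K → H × K be the canonical homomorphism induced by the product inclusions, and let ρ : H ∗ K → A be the homomorphism induced by the two subgroup inclusions (the realization map). Then the image under ρ of the kernel of Σ equals the commutator subgroup ⁅H, K⁆ of A. (This is the paper's claim that Higgins' commutator is the regular image of the formal commutator H ⋄ K under the realization map.) -/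
open Monoid

/-!
In `G ∗ G'` the subgroup `N = ⁅G, G'⁆` is normal, because it is normalized by both factors. Modulo
`N` the factors commute, so the projection `G ∗ G' → (G ∗ G') ⧸ N` factors through `Σ`; hence
`ker Σ = N`. Homomorphisms carry commutators of subgroups to commutators of their images, so a
homomorphism out of `G ∗ G'` sends `ker Σ` to the commutator of the images of the two factors.
-/

theorem commutator_normal_of_sup_eq_top {G : Type*} [Group G] {H K : Subgroup G}
    (h : H ⊔ K = ⊤) : ⁅H, K⁆.Normal := by
  rw [← Subgroup.normalizer_eq_top_iff, eq_top_iff, ← h]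
  exact sup_le (Subgroup.normalizer_commutator_ge_left H K)
    (Subgroup.normalizer_commutator_ge_right H K)

theorem commute_map_of_commutator_le_ker {G G' : Type*} [Group G] [Group G'] {H K : Subgroup G}
    {φ : G →* G'} (hφ : ⁅H, K⁆ ≤ φ.ker) {h k : G} (hh : h ∈ H) (hk : k ∈ K) :
    Commute (φ h) (φ k) := by
  rw [← commutatorElement_eq_one_iff_commute, ← map_commutatorElement]
  exact hφ (Subgroup.commutator_mem_commutator hh hk)

section Coprod

variable {G G' : Type*} [Group G] [Group G']

theorem commutator_range_inl_range_inr_le_ker_toProd :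
    ⁅(Coprod.inl : G →* Coprod G G').range, (Coprod.inr : G' →* Coprod G G').range⁆ ≤
      (Coprod.toProd : Coprod G G' →* G × G').ker := by
  rw [Subgroup.commutator_le]
  rintro _ ⟨g, rfl⟩ _ ⟨g', rfl⟩
  rw [MonoidHom.mem_ker, map_commutatorElement, commutatorElement_eq_one_iff_commute]
  exact MonoidHom.commute_inl_inr g g'

theorem ker_toProd_le_ker_of_commute {P : Type*} [Monoid P] (φ : Coprod G G' →* P)
    (hφ : ∀ g g', Commute (φ (Coprod.inl g)) (φ (Coprod.inr g'))) :
    (Coprod.toProd : Coprod G G' →* G × G').ker ≤ φ.ker := by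
  let ψ : G × G' →* P := (φ.comp Coprod.inl).noncommCoprod (φ.comp Coprod.inr) hφ
  have hψ : ψ.comp Coprod.toProd = φ :=
    Coprod.hom_ext (MonoidHom.noncommCoprod_comp_inl _ _ hφ)
      (MonoidHom.noncommCoprod_comp_inr _ _ hφ)
  intro x hx
  rw [MonoidHom.mem_ker, ← hψ, MonoidHom.comp_apply, MonoidHom.mem_ker.1 hx, map_one]

theorem ker_toProd_eq_commutator :
    (Coprod.toProd : Coprod G G' →* G × G').ker =
      ⁅(Coprod.inl : G →* Coprod G G').range, (Coprod.inr : G' →* Coprod G G').range⁆ := by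
  refine le_antisymm ?_ commutator_range_inl_range_inr_le_ker_toProd
  set N := ⁅(Coprod.inl : G →* Coprod G G').range, (Coprod.inr : G' →* Coprod G G').range⁆
  have : N.Normal := commutator_normal_of_sup_eq_top Coprod.range_inl_sup_range_inr
  have hN : (QuotientGroup.mk' N).ker = N := QuotientGroup.ker_mk' N
  calc
    _ ≤ (QuotientGroup.mk' N).ker := ker_toProd_le_ker_of_commute _ fun g g' ↦
      commute_map_of_commutator_le_ker hN.ge ⟨g, rfl⟩ ⟨g', rfl⟩
    _ = N := hN

theorem map_ker_sigma_eq_commutator_general {A : Type*} [Group A] (f : G →* A) (f' : G' →* A) :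
    Subgroup.map (Coprod.lift f f')
        (Coprod.lift (MonoidHom.inl G G') (MonoidHom.inr G G')).ker = ⁅f.range, f'.range⁆ := by
  change Subgroup.map (Coprod.lift f f') Coprod.toProd.ker = _
  rw [ker_toProd_eq_commutator, Subgroup.map_commutator, MonoidHom.map_range, MonoidHom.map_range,
    Coprod.lift_comp_inl, Coprod.lift_comp_inr]

end Coprod

/-- Higgins' commutator as the image of the formal commutator: for subgroups
`H`, `K` of a group `A`, with `Σ : H ∗ K → H × K` the canonical homomorphism
and `ρ : H ∗ K → A` the realization map induced by the inclusions, the image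
under `ρ` of `ker Σ` equals the commutator subgroup `⁅H, K⁆`. -/
theorem map_ker_sigma_eq_commutator {A : Type*} [Group A] (H K : Subgroup A) :
    Subgroup.map (Coprod.lift H.subtype K.subtype)
        (Coprod.lift (MonoidHom.inl H K) (MonoidHom.inr H K)).ker = ⁅H, K⁆ := by
  rw [map_ker_sigma_eq_commutator_general, H.range_subtype, K.range_subtype]
end

section
/- Let B and A be groups and let π : B ∗ A → B be the homomorphism from the free product that is the identity on B and trivial on A. Then the kernel of π is generated, as a subgroup of B ∗ A, by the formal conjugates inl(b) * inr(a) * inl(b)⁻¹ for b ∈ B, a ∈ A. (This is the paper's description, in the category of groups, of the object B ♭ A = ker([1,0] : B + A → B) as the group generated by formal conjugates.) -/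
open Monoid

/-!
The subgroup `N` generated by the formal conjugates is normal: `inl B` permutes the generators,
`inr A` lies in `N`, and together they generate `B ∗ A`. Hence every element factors as
`inl b * n` with `n ∈ N`. Since `π` kills `N` and is injective on `inl B`, its kernel is `N`.
-/

section Subgroup

variable {G : Type*} [Group G] {H K N : Subgroup G} {s : Set G}

/-- The conjugates of the elements of `s` by the elements of `H`. Unlike
`Group.conjugatesOfSet`, only conjugation by `H` is allowed; for `H = inl B` and `s = inr A` in
`B ∗ A`, these are the formal conjugates that generate `B ♭ A`. -/
def conjugatesBy (H : Subgroup G) (s : Set G) : Set G :=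
  {x | ∃ h ∈ H, ∃ g ∈ s, x = h * g * h⁻¹}

theorem conjugatesBy_range {B ι : Type*} [Group B] (f : B →* G) (g : ι → G) :
    conjugatesBy f.range (Set.range g) = {x | ∃ b, ∃ i, x = f b * g i * (f b)⁻¹} := by
  simp only [conjugatesBy, MonoidHom.mem_range, Set.mem_range, exists_exists_eq_and]

theorem subset_conjugatesBy : s ⊆ conjugatesBy H s :=
  fun g hg ↦ ⟨1, one_mem H, g, hg, by simp⟩

theorem conjugatesBy_subset_of_normal [K.Normal] (hs : s ⊆ K) : conjugatesBy H s ⊆ K := by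
  rintro _ ⟨h, -, g, hg, rfl⟩
  exact Subgroup.Normal.conj_mem inferInstance g (hs hg) h

theorem conj_mem_conjugatesBy {h x : G} (hh : h ∈ H) (hx : x ∈ conjugatesBy H s) :
    h * x * h⁻¹ ∈ conjugatesBy H s := by
  obtain ⟨k, hk, g, hg, rfl⟩ := hx
  exact ⟨h * k, mul_mem hh hk, g, hg, by group⟩

theorem closure_conjugatesBy_normal (hHs : H ⊔ Subgroup.closure s = ⊤) :
    (Subgroup.closure (conjugatesBy H s)).Normal := by
  have hH : H ≤ Subgroup.normalizer (Subgroup.closure (conjugatesBy H s)) :=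
    Subgroup.le_normalizer_closure_iff.2 fun _ hh _ hx ↦
      Subgroup.subset_closure (conj_mem_conjugatesBy hh hx)
  have hs : Subgroup.closure s ≤ Subgroup.normalizer (Subgroup.closure (conjugatesBy H s)) :=
    (Subgroup.closure_mono subset_conjugatesBy).trans Subgroup.le_normalizer
  exact Subgroup.normalizer_eq_top_iff.1 (top_le_iff.1 (hHs ▸ sup_le hH hs))

theorem eq_of_le_of_disjoint_of_sup_eq_top [N.Normal] (hNK : N ≤ K) (hHK : Disjoint H K)
    (hHN : H ⊔ N = ⊤) : N = K := by
  refine hNK.antisymm fun x hx ↦ ?_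
  obtain ⟨h, hh, n, hn, rfl⟩ := Subgroup.mem_sup_of_normal_right.1 (hHN ▸ Subgroup.mem_top x)
  have h_mem_K : h ∈ K := (mul_mem_cancel_right (hNK hn)).1 hx
  have h_eq_one : h = 1 := Subgroup.disjoint_def.1 hHK hh h_mem_K
  simpa [h_eq_one] using hn

theorem closure_conjugatesBy_eq_of_disjoint [K.Normal] (hs : s ⊆ K) (hHK : Disjoint H K)
    (hHs : H ⊔ Subgroup.closure s = ⊤) : Subgroup.closure (conjugatesBy H s) = K := by
  have := closure_conjugatesBy_normal hHs
  have hle : Subgroup.closure (conjugatesBy H s) ≤ K :=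
    (Subgroup.closure_le K).2 (conjugatesBy_subset_of_normal hs)
  have hsup : H ⊔ Subgroup.closure (conjugatesBy H s) = ⊤ :=
    top_le_iff.1 (hHs ▸ sup_le_sup_left (Subgroup.closure_mono subset_conjugatesBy) H)
  exact eq_of_le_of_disjoint_of_sup_eq_top hle hHK hsup

end Subgroup

section Coprod

variable {B A : Type*} [Group B] [Group A]

theorem disjoint_range_inl_ker_fst :
    Disjoint (Coprod.inl : B →* Coprod B A).range (Coprod.fst : Coprod B A →* B).ker := by
  rw [Subgroup.disjoint_def]
  rintro _ ⟨b, rfl⟩ hb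
  have hb_one : b = 1 := by simpa [MonoidHom.mem_ker] using hb
  simp [hb_one]

theorem range_inr_le_ker_fst :
    (Coprod.inr : A →* Coprod B A).range ≤ (Coprod.fst : Coprod B A →* B).ker :=
  (MonoidHom.range_le_ker_iff _ _).2 Coprod.fst_comp_inr

end Coprod

/-- The object `B ♭ A` in groups: the kernel of the homomorphism
`π : B ∗ A → B` (identity on `B`, trivial on `A`) is generated by the formal
conjugates `inl b * inr a * (inl b)⁻¹` for `b ∈ B`, `a ∈ A`. -/
theorem ker_pi_eq_closure_formal_conjugates (B A : Type*) [Group B] [Group A] :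
    (Coprod.lift (MonoidHom.id B) (1 : A →* B)).ker =
      Subgroup.closure
        {x : Coprod B A | ∃ b : B, ∃ a : A,
          x = Coprod.inl b * Coprod.inr a * (Coprod.inl b)⁻¹} := by
  have hgen : (Coprod.inl : B →* Coprod B A).range ⊔
      Subgroup.closure (Coprod.inr : A →* Coprod B A).range = ⊤ := by
    rw [Subgroup.closure_eq, Coprod.range_inl_sup_range_inr]
  rw [← conjugatesBy_range, ← MonoidHom.coe_range]
  exact (closure_conjugatesBy_eq_of_disjoint range_inr_le_ker_fst
    disjoint_range_inl_ker_fst hgen).symm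
end

section
/- Let X be a group and let f : A → B be a surjective group homomorphism. Consider the induced homomorphism F = (id_X) ∗ f : X ∗ A → X ∗ B between free products, and the projections π_A : X ∗ A → X and π_B : X ∗ B → X that are the identity on X and trivial on A (resp. B). Then F maps the kernel of π_A onto the kernel of π_B, i.e. the image of ker(π_A) under F equals ker(π_B). (Group-theoretic case of Lemma: in an ideal-determined category, the functor X ♭ (−) preserves regular epimorphisms.) -/
open Monoid

/-!
A surjection `φ` maps the kernel of any composite `ψ ∘ φ` onto the kernel of `ψ`. Here
`φ = id_X ∗ f` is surjective because its image contains both canonical copies, of `X` and of `B`,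
and `π_A = π_B ∘ φ` because the two sides agree on `X` and on `A`.
-/

section MulOneClass

variable {M N M' N' : Type*} [MulOneClass M] [MulOneClass N] [MulOneClass M'] [MulOneClass N']
  {f : M →* M'} {g : N →* N'}

theorem coprodMap_surjective (hf : Function.Surjective f) (hg : Function.Surjective g) :
    Function.Surjective (Coprod.map f g) := by
  rw [← MonoidHom.mrange_eq_top] at hf hg ⊢
  calc MonoidHom.mrange (Coprod.map f g)
      = (MonoidHom.mrange f).map Coprod.inl ⊔ (MonoidHom.mrange g).map Coprod.inr := by
        rw [Coprod.mrange_eq, Coprod.map_comp_inl, Coprod.map_comp_inr,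
          MonoidHom.map_mrange, MonoidHom.map_mrange]
    _ = ⊤ := by
        rw [hf, hg, ← MonoidHom.mrange_eq_map, ← MonoidHom.mrange_eq_map,
          Coprod.mrange_inl_sup_mrange_inr]

variable {P : Type*} [Monoid P]

theorem coprodLift_comp_coprodMap (h : M' →* P) (k : N' →* P) (f : M →* M') (g : N →* N') :
    (Coprod.lift h k).comp (Coprod.map f g) = Coprod.lift (h.comp f) (k.comp g) :=
  Coprod.hom_ext rfl rfl

theorem map_ker_pi_flat_general (hf : Function.Surjective f) (hg : Function.Surjective g)
    (h : M' →* P) (k : N' →* P) :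
    Submonoid.map (Coprod.map f g) (MonoidHom.mker (Coprod.lift (h.comp f) (k.comp g))) =
      MonoidHom.mker (Coprod.lift h k) := by
  rw [← coprodLift_comp_coprodMap, ← MonoidHom.comap_mker,
    Submonoid.map_comap_eq_of_surjective (coprodMap_surjective hf hg)]

end MulOneClass

/-- The functor `X ♭ (−)` preserves surjections in groups: if `f : A → B` is a
surjective homomorphism and `F = id_X ∗ f : X ∗ A → X ∗ B`, then `F` maps the
kernel of `π_A : X ∗ A → X` onto the kernel of `π_B : X ∗ B → X`. -/
theorem map_ker_pi_flat {X A B : Type*} [Group X] [Group A] [Group B]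
    (f : A →* B) (hf : Function.Surjective f) :
    Subgroup.map (Coprod.map (MonoidHom.id X) f)
        (Coprod.lift (MonoidHom.id X) (1 : A →* X)).ker =
      (Coprod.lift (MonoidHom.id X) (1 : B →* X)).ker :=
  Subgroup.toSubmonoid_injective <|
    map_ker_pi_flat_general Function.surjective_id hf (MonoidHom.id X) 1
end

section
/- Let X be a group and let f : A → B be a surjective group homomorphism. Consider the induced homomorphism F = (id_X) ∗ f : X ∗ A → X ∗ B between free products, and the canonical homomorphisms Σ_{X,A} : X ∗ A → X × A and Σ_{X,B} : X ∗ B → X × B induced by the inclusions. Then F maps the kernel of Σ_{X,A} onto the kernel of Σ_{X,B}, i.e. the image of ker(Σ_{X,A}) under F equals ker(Σ_{X,B}). (Group-theoretic case of Lemma: in an ideal-determined category, the functor X ⋄ (−) preserves regular epimorphisms.) -/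
open Monoid

/-!
The maps `Σ` form a commutative square over `f ∗ g` and `f × g`. A diagram chase in this square
shows that a preimage under `f ∗ g` of an element of `ker Σ` can be corrected into `ker Σ` as soon
as `Σ` maps `ker (f ∗ g)` onto `ker (f × g)`; and `(x, a)` in the latter is `Σ (inl x * inr a)`.
-/

theorem map_ker_eq_ker_of_comp_eq {G H K L : Type*} [Group G] [Group H] [Group K] [Group L]
    {p : G →* H} {q : K →* L} {F : G →* K} {φ : H →* L} (hcomm : q.comp F = φ.comp p)
    (hF : Function.Surjective F) (hker : φ.ker ≤ F.ker.map p) :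
    p.ker.map F = q.ker := by
  have hcomap : q.ker.comap F = φ.ker.comap p := by
    rw [MonoidHom.comap_ker, MonoidHom.comap_ker, hcomm]
  apply le_antisymm
  · rw [Subgroup.map_le_iff_le_comap, hcomap]
    exact p.ker_le_comap φ.ker
  · calc q.ker = (φ.ker.comap p).map F := by
          rw [← hcomap, Subgroup.map_comap_eq_self_of_surjective hF]
      _ ≤ ((F.ker.map p).comap p).map F := Subgroup.map_mono (Subgroup.comap_mono hker)
      _ = (F.ker ⊔ p.ker).map F := by rw [Subgroup.comap_map_eq]
      _ = p.ker.map F := by rw [Subgroup.map_sup, Subgroup.map_ker_self, bot_sup_eq]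

theorem coprod_map_surjective {M M' N N' : Type*} [MulOneClass M] [MulOneClass M']
    [MulOneClass N] [MulOneClass N'] {f : M →* M'} {g : N →* N'}
    (hf : Function.Surjective f) (hg : Function.Surjective g) :
    Function.Surjective (Coprod.map f g) := by
  rw [← MonoidHom.mrange_eq_top, Coprod.mrange_eq, Coprod.map_comp_inl, Coprod.map_comp_inr,
    MonoidHom.mrange_comp, MonoidHom.mrange_comp, MonoidHom.mrange_eq_top.2 hf,
    MonoidHom.mrange_eq_top.2 hg, ← MonoidHom.mrange_eq_map, ← MonoidHom.mrange_eq_map,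
    Coprod.mrange_inl_sup_mrange_inr]

theorem toProd_comp_coprod_map {M M' N N' : Type*} [Monoid M] [Monoid M'] [Monoid N] [Monoid N']
    (f : M →* M') (g : N →* N') :
    Coprod.toProd.comp (Coprod.map f g) = (f.prodMap g).comp Coprod.toProd := by
  ext <;> simp

section Group

variable {X Y A B : Type*} [Group X] [Group Y] [Group A] [Group B]

theorem ker_prodMap_le_map_toProd_ker_coprod_map (f : X →* Y) (g : A →* B) :
    (f.prodMap g).ker ≤ (Coprod.map f g).ker.map Coprod.toProd := by
  rintro ⟨x, a⟩ hxa
  obtain ⟨hx, ha⟩ : f x = 1 ∧ g a = 1 := Prod.mk.inj hxa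
  refine ⟨Coprod.inl x * Coprod.inr a, ?_, by simp⟩
  simp [MonoidHom.mem_ker, hx, ha]

theorem map_ker_sigma_diamond_general {f : X →* Y} {g : A →* B} (hf : Function.Surjective f)
    (hg : Function.Surjective g) :
    (Coprod.toProd : Coprod X A →* X × A).ker.map (Coprod.map f g) =
      (Coprod.toProd : Coprod Y B →* Y × B).ker :=
  map_ker_eq_ker_of_comp_eq (toProd_comp_coprod_map f g) (coprod_map_surjective hf hg)
    (ker_prodMap_le_map_toProd_ker_coprod_map f g)

end Group

/-- The functor `X ⋄ (−)` preserves surjections in groups: if `f : A → B` is a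
surjective homomorphism and `F = id_X ∗ f : X ∗ A → X ∗ B`, then `F` maps the
kernel of `Σ_{X,A} : X ∗ A → X × A` onto the kernel of `Σ_{X,B} : X ∗ B → X × B`. -/
theorem map_ker_sigma_diamond {X A B : Type*} [Group X] [Group A] [Group B]
    (f : A →* B) (hf : Function.Surjective f) :
    Subgroup.map (Coprod.map (MonoidHom.id X) f)
        (Coprod.lift (MonoidHom.inl X A) (MonoidHom.inr X A)).ker =
      (Coprod.lift (MonoidHom.inl X B) (MonoidHom.inr X B)).ker :=
  map_ker_sigma_diamond_general Function.surjective_id hf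
end

section
/- In the alternating group A₅ on five letters, let H be the subgroup generated by the double transposition (1 2)(3 4) and K the subgroup generated by (1 2)(4 5). Then the commutator subgroup ⁅H, K⁆ equals the subgroup generated by the 3-cycle (3 4 5), while the normal closure of ⁅H, K⁆ in A₅ is all of A₅; in particular ⁅H, K⁆ is strictly smaller than its normal closure, so Higgins' commutator [H,K]_H differs from Huq's commutator [H,K]_Q. (Example in the paper.) -/
/-!
If `a` and `b` square to `1`, the only possibly nontrivial commutator between an element of `⟨a⟩`
and one of `⟨b⟩` is `⁅a, b⁆`, so `⁅⟨a⟩, ⟨b⟩⁆` is cyclic. If moreover `a` and `b` do not commute and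
the group is simple, the normal closure of this nontrivial cyclic subgroup is the whole group, which
is not cyclic. In `A₅` the commutator of the two double transpositions is the inverse of the
3-cycle `(3 4 5)`.
-/

section

open Subgroup
open scoped commutatorElement

variable {G : Type*} [Group G]

theorem eq_one_or_eq_of_mem_closure_singleton {a x : G} (ha : a ^ 2 = 1)
    (hx : x ∈ closure {a}) : x = 1 ∨ x = a := by
  obtain ⟨n, rfl⟩ := mem_closure_singleton.mp hx
  have ha' : a ^ (2 : ℤ) = 1 := mod_cast ha
  obtain ⟨k, rfl | rfl⟩ := n.even_or_odd'
  · exact .inl (by rw [zpow_mul, ha', one_zpow])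
  · exact .inr (by rw [zpow_add_one, zpow_mul, ha', one_zpow, one_mul])

theorem commutator_closure_singleton_of_sq_eq_one {a b : G} (ha : a ^ 2 = 1) (hb : b ^ 2 = 1) :
    ⁅closure {a}, closure {b}⁆ = closure {⁅a, b⁆} := by
  apply le_antisymm
  · rw [commutator_le]
    intro x hx y hy
    obtain rfl | rfl := eq_one_or_eq_of_mem_closure_singleton ha hx
    · rw [commutatorElement_one_left]
      exact one_mem _
    obtain rfl | rfl := eq_one_or_eq_of_mem_closure_singleton hb hy
    · rw [commutatorElement_one_right]
      exact one_mem _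
    exact mem_closure_singleton_self _
  · rw [closure_le, Set.singleton_subset_iff]
    exact commutator_mem_commutator (mem_closure_singleton_self a) (mem_closure_singleton_self b)

theorem normalClosure_eq_top_of_ne_bot [IsSimpleGroup G] {S : Subgroup G} (hS : S ≠ ⊥) :
    normalClosure (S : Set G) = ⊤ :=
  normalClosure_normal.eq_bot_or_eq_top.resolve_left fun h =>
    hS (le_bot_iff.mp (le_normalClosure.trans h.le))

theorem closure_singleton_ne_top_of_not_comm {a b : G} (hab : a * b ≠ b * a) (g : G) :
    closure {g} ≠ ⊤ := by
  intro hg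
  have : IsCyclic G :=
    isCyclic_iff_exists_zpowers_eq_top.mpr ⟨g, (zpowers_eq_closure g).trans hg⟩
  exact hab (mul_comm' a b)

theorem higgins_ne_huq_in_A5_general [IsSimpleGroup G] {a b : G}
    (ha : a ^ 2 = 1) (hb : b ^ 2 = 1) (hab : a * b ≠ b * a) :
    ⁅closure {a}, closure {b}⁆ = closure {⁅a, b⁆} ∧
      normalClosure ((⁅closure {a}, closure {b}⁆ : Subgroup G) : Set G) = ⊤ ∧
      ⁅closure {a}, closure {b}⁆ <
        normalClosure ((⁅closure {a}, closure {b}⁆ : Subgroup G) : Set G) := by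
  have hcomm := commutator_closure_singleton_of_sq_eq_one ha hb
  have hne_bot : ⁅closure {a}, closure {b}⁆ ≠ ⊥ := by
    rwa [hcomm, Ne, closure_eq_bot_iff, Set.singleton_subset_singleton,
      commutatorElement_eq_one_iff_mul_comm]
  have htop := normalClosure_eq_top_of_ne_bot hne_bot
  refine ⟨hcomm, htop, ?_⟩
  rw [htop, hcomm, lt_top_iff_ne_top]
  exact closure_singleton_ne_top_of_not_comm hab ⁅a, b⁆

end

/-- In `A₅` (permutations of `Fin 5`, zero-indexed), with
`H = ⟨(1 2)(3 4)⟩ = ⟨swap 0 1 * swap 2 3⟩` and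
`K = ⟨(1 2)(4 5)⟩ = ⟨swap 0 1 * swap 3 4⟩`, the commutator subgroup `⁅H, K⁆`
equals the subgroup generated by the 3-cycle `(3 4 5) = swap 2 3 * swap 3 4`,
while the normal closure of `⁅H, K⁆` is all of `A₅`; in particular `⁅H, K⁆`
is strictly smaller than its normal closure. -/
theorem higgins_ne_huq_in_A5
    (H : Subgroup (alternatingGroup (Fin 5)))
    (K : Subgroup (alternatingGroup (Fin 5)))
    (hH : H = Subgroup.closure
      {(⟨Equiv.swap 0 1 * Equiv.swap 2 3,
          by rw [Equiv.Perm.mem_alternatingGroup]; decide⟩ : alternatingGroup (Fin 5))})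
    (hK : K = Subgroup.closure
      {(⟨Equiv.swap 0 1 * Equiv.swap 3 4,
          by rw [Equiv.Perm.mem_alternatingGroup]; decide⟩ : alternatingGroup (Fin 5))}) :
    ⁅H, K⁆ = Subgroup.closure
        {(⟨Equiv.swap 2 3 * Equiv.swap 3 4,
            by rw [Equiv.Perm.mem_alternatingGroup]; decide⟩ : alternatingGroup (Fin 5))} ∧
      Subgroup.normalClosure ((⁅H, K⁆ : Subgroup (alternatingGroup (Fin 5))) :
          Set (alternatingGroup (Fin 5))) = ⊤ ∧
      ⁅H, K⁆ < Subgroup.normalClosure ((⁅H, K⁆ : Subgroup (alternatingGroup (Fin 5))) :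
          Set (alternatingGroup (Fin 5))) := by
  subst hH hK
  refine And.imp_left (fun hcomm => Eq.trans hcomm ?closure_eq)
    (higgins_ne_huq_in_A5_general ?sq_left ?sq_right ?not_comm)
  case closure_eq =>
    rw [← Subgroup.closure_singleton_inv]
    congr 2
    decide
  all_goals decide
end

section
/- In the alternating group A₆ on six letters, let H be the subgroup generated by the 3-cycle (1 2 3) and K the subgroup generated by (4 5 6), and let H̄ and K̄ be their normal closures in A₆. Then ⁅H, K⁆ is the trivial subgroup, while ⁅H̄, K̄⁆ = A₆. In particular, Huq's commutator does not commute with normalization: [H,K]_Q = 0 but [H̄,K̄]_Q = A₆. (Example in the paper, showing that [H,K] = [H̄,K̄] can fail when neither subobject is the whole object.) -/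
/-!
`A₆` is a non-abelian simple group, so each nontrivial element has normal closure `A₆`, and `A₆` is
its own commutator subgroup. Yet six letters leave room for two disjoint 3-cycles, which commute.
-/

section

open Subgroup

variable {G : Type*} [Group G]

theorem commutator_closure_eq_bot_iff {s t : Set G} :
    ⁅closure s, closure t⁆ = ⊥ ↔ ∀ a ∈ s, ∀ b ∈ t, Commute a b := by
  rw [commutator_eq_bot_iff_le_centralizer, centralizer_closure, closure_le]
  simp only [Set.subset_def, SetLike.mem_coe, mem_centralizer_iff, commute_iff_eq, eq_comm]

variable [IsSimpleGroup G]

theorem normal_eq_top_iff_ne_bot_of_isSimpleGroup {N : Subgroup G} [hN : N.Normal] :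
    N = ⊤ ↔ N ≠ ⊥ :=
  ⟨fun h ↦ h ▸ top_ne_bot, hN.eq_bot_or_eq_top.resolve_left⟩

theorem normalClosure_eq_top_iff_of_isSimpleGroup {s : Set G} :
    normalClosure s = ⊤ ↔ ¬s ⊆ {1} := by
  rw [normal_eq_top_iff_ne_bot_of_isSimpleGroup, ne_eq, normalClosure_eq_bot_iff]

theorem commutator_eq_top_iff_of_isSimpleGroup :
    commutator G = ⊤ ↔ ¬IsMulCommutative G := by
  rw [normal_eq_top_iff_ne_bot_of_isSimpleGroup, ne_eq, commutator_eq_bot_iff]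

theorem commutator_normalClosure_in_A6_general (hG : ¬IsMulCommutative G) {a b : G}
    (ha : a ≠ 1) (hb : b ≠ 1) (hab : Commute a b) :
    ⁅closure {a}, closure {b}⁆ = ⊥ ∧
      ⁅normalClosure (closure {a} : Set G), normalClosure (closure {b} : Set G)⁆ = ⊤ := by
  have normalClosure_eq_top {x : G} (hx : x ≠ 1) : normalClosure (closure {x} : Set G) = ⊤ := by
    rw [normalClosure_closure_eq_normalClosure, normalClosure_eq_top_iff_of_isSimpleGroup]
    simpa only [Set.singleton_subset_iff, Set.mem_singleton_iff] using hx
  refine ⟨commutator_closure_eq_bot_iff.2 ?_, ?_⟩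
  · rintro _ rfl _ rfl
    exact hab
  · rw [normalClosure_eq_top ha, normalClosure_eq_top hb, ← _root_.commutator_def]
    exact commutator_eq_top_iff_of_isSimpleGroup.2 hG

end

/-- In `A₆` (permutations of `Fin 6`, zero-indexed), with
`H = ⟨(1 2 3)⟩ = ⟨swap 0 1 * swap 1 2⟩` and `K = ⟨(4 5 6)⟩ = ⟨swap 3 4 * swap 4 5⟩`,
and `H̄`, `K̄` their normal closures in `A₆`, one has `⁅H, K⁆ = ⊥` while
`⁅H̄, K̄⁆ = ⊤`: Huq's commutator does not commute with normalization. -/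
theorem commutator_normalClosure_in_A6
    (H : Subgroup (alternatingGroup (Fin 6)))
    (K : Subgroup (alternatingGroup (Fin 6)))
    (hH : H = Subgroup.closure
      {(⟨Equiv.swap 0 1 * Equiv.swap 1 2,
          by rw [Equiv.Perm.mem_alternatingGroup]; decide⟩ : alternatingGroup (Fin 6))})
    (hK : K = Subgroup.closure
      {(⟨Equiv.swap 3 4 * Equiv.swap 4 5,
          by rw [Equiv.Perm.mem_alternatingGroup]; decide⟩ : alternatingGroup (Fin 6))}) :
    ⁅H, K⁆ = ⊥ ∧
      ⁅Subgroup.normalClosure (H : Set (alternatingGroup (Fin 6))),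
        Subgroup.normalClosure (K : Set (alternatingGroup (Fin 6)))⁆ = ⊤ := by
  have : IsSimpleGroup (alternatingGroup (Fin 6)) := alternatingGroup.isSimpleGroup (by simp)
  have not_comm : ¬IsMulCommutative (alternatingGroup (Fin 6)) := by
    simp [alternatingGroup.isMulCommutative_iff_card_le_three]
  subst hH hK
  exact commutator_normalClosure_in_A6_general not_comm (by decide) (by decide)
    (Subtype.ext (Equiv.Perm.Disjoint.commute fun i ↦ by decide +revert))
end
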